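/- Let A be a separable unital C*-algebra and let H be a separable infinite-dimensional Hilbert space. Suppose that A admits at least one finite-dimensional irreducible unital representation, and that every finite-dimensional irreducible unital representation π₁ of A has the property that for every unital representation ρ of A on a separable Hilbert space, π₁ ≺ ρ implies that π₁ is unitarily equivalent to a subrepresentation of ρ. Then WM(A,H) is closed and nowhere dense in Rep(A,H) in the point-strong operator topology. -/

import Mathlib

open scoped InnerProductSpace

noncomputable section

/-- The space of unital representations of `A` on `H`, i.e. unital `*`-homomorphisms
`A → B(H)`. -/
abbrev CRep (A H : Type*) [CStarAlgebra A] [NormedAddCommGroup H]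
    [InnerProductSpace ℂ H] [CompleteSpace H] : Type _ :=
  A →⋆ₐ[ℂ] (H →L[ℂ] H)

/-- The point-strong operator topology on `CRep A H`: the topology of pointwise convergence
with `B(H)` carrying the strong operator topology (i.e. pointwise convergence on vectors). -/
instance CRep.instTopologicalSpace (A H : Type*) [CStarAlgebra A] [NormedAddCommGroup H]
    [InnerProductSpace ℂ H] [CompleteSpace H] : TopologicalSpace (CRep A H) :=
  TopologicalSpace.induced (fun π => (fun (a : A) (x : H) => π a x)) inferInstance

/-- A closed subspace `K` is invariant under a unital representation `π`. -/
def CRepInvariant {A H : Type*} [CStarAlgebra A] [NormedAddCommGroup H]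
    [InnerProductSpace ℂ H] [CompleteSpace H]
    (π : CRep A H) (K : Submodule ℂ H) : Prop :=
  ∀ a : A, ∀ x ∈ K, π a x ∈ K

/-- A unital representation is weakly mixing if it admits no nonzero finite-dimensional
closed invariant subspace. -/
def CRepWeaklyMixing {A H : Type*} [CStarAlgebra A] [NormedAddCommGroup H]
    [InnerProductSpace ℂ H] [CompleteSpace H]
    (π : CRep A H) : Prop :=
  ∀ K : Submodule ℂ H, IsClosed (K : Set H) → FiniteDimensional ℂ K →
    CRepInvariant π K → K = ⊥

/-- A unital representation is irreducible if its only closed invariant subspaces are `⊥`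
and the whole space. -/
def CRepIrreducible {A H : Type*} [CStarAlgebra A] [NormedAddCommGroup H]
    [InnerProductSpace ℂ H] [CompleteSpace H] (π : CRep A H) : Prop :=
  ∀ K : Submodule ℂ H, IsClosed (K : Set H) → (∀ a : A, ∀ x ∈ K, π a x ∈ K) →
    K = ⊥ ∨ K = ⊤

/-- The weak containment relation `π ≺ ρ`. -/
def CRepPrec {A H K : Type*} [CStarAlgebra A] [NormedAddCommGroup H]
    [InnerProductSpace ℂ H] [CompleteSpace H] [NormedAddCommGroup K]
    [InnerProductSpace ℂ K] [CompleteSpace K]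
    (π : CRep A H) (ρ : CRep A K) : Prop :=
  ∀ (Ω : Finset A) (n : ℕ) (ξ : Fin n → H), Orthonormal ℂ ξ → ∀ ε : ℝ, 0 < ε →
    ∃ ζ : Fin n → K, Orthonormal ℂ ζ ∧
      ∀ a ∈ Ω, ∀ i : Fin n, ‖⟪π a (ξ i), ξ i⟫_ℂ - ⟪ρ a (ζ i), ζ i⟫_ℂ‖ < ε

open TopologicalSpace Filter Topology

/-!
A representation which is not weakly mixing contains a finite-dimensional irreducible `π₁`. If
it were a limit of weakly mixing `ρ`'s, then along a sequence of them the coefficients of `π₁`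
would be limits of coefficients of the `ρ k`, so `π₁` would be weakly contained in a separable
subrepresentation of the Hilbert space direct sum of the `ρ k`. By isolation the weakly mixing
direct sum would contain `π₁`, which is impossible. Hence weak mixing is a closed condition.

It has empty interior because any finite-dimensional `σ` can be hidden in the complement of
finitely many vectors: there is a unitary `H ⊕ K ≃ H` fixing a prescribed finite-dimensional
subspace of `H`, and it carries `π ⊕ σ` to a representation which is not weakly mixing and agrees
with `π` on finitely many prescribed pairs `(a, x)`.
-/

section HilbertSpace

variable {𝕜 E F : Type*} [RCLike 𝕜] [NormedAddCommGroup E] [InnerProductSpace 𝕜 E]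
  [NormedAddCommGroup F] [InnerProductSpace 𝕜 F]

theorem countable_of_orthonormal [SeparableSpace E] {ι : Type*} {v : ι → E}
    (hv : Orthonormal 𝕜 v) : Countable ι := by
  refine Pairwise.countable_of_isOpen_disjoint (s := fun i => Metric.ball (v i) (1 / 2)) ?_
    (fun i => Metric.isOpen_ball) (fun i => Metric.nonempty_ball.2 (by norm_num))
  intro i j hij
  refine Metric.ball_disjoint_ball ?_
  have hdist_sq : ‖v i - v j‖ ^ 2 = 2 := by
    rw [norm_sub_sq (𝕜 := 𝕜), hv.1 i, hv.1 j, hv.2 hij]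
    norm_num
  rw [dist_eq_norm]
  nlinarith [norm_nonneg (v i - v j)]

theorem infinite_of_hilbertBasis {ι : Type*} (b : HilbertBasis ι 𝕜 E)
    (hE : ¬ FiniteDimensional 𝕜 E) : Infinite ι := by
  by_contra hι
  have := not_infinite_iff_finite.1 hι
  have := Fintype.ofFinite ι
  exact hE b.toOrthonormalBasis.toBasis.finiteDimensional_of_finite

theorem exists_linearIsometryEquiv_lp_set_nat [CompleteSpace E] [SeparableSpace E] :
    ∃ s : Set ℕ, Nonempty (E ≃ₗᵢ[𝕜] lp (fun _ : s => 𝕜) 2) := by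
  obtain ⟨w, b, -⟩ := exists_hilbertBasis 𝕜 E
  have : Countable w := countable_of_orthonormal b.orthonormal
  obtain ⟨f, hf⟩ := exists_injective_nat w
  let e : w ≃ Set.range f := Equiv.ofInjective f hf
  refine ⟨Set.range f, ⟨(HilbertBasis.mk (b.orthonormal.comp e.symm e.symm.injective) ?_).repr⟩⟩
  rw [e.symm.surjective.range_comp, b.dense_span]

variable (𝕜 E F) in
/-- The inclusion of the second summand into a Hilbert space direct sum. -/
def prodInrIsometry : F →ₗᵢ[𝕜] WithLp 2 (E × F) where
  __ := (WithLp.linearEquiv 2 𝕜 (E × F)).symm.toLinearMap ∘ₗ LinearMap.inr 𝕜 E F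
  norm_map' y := WithLp.norm_toLp_snd 2 E F y

/-- The Hilbert basis of a direct sum obtained from Hilbert bases of the two summands. -/
def hilbertBasisProd [CompleteSpace E] [CompleteSpace F] {ι κ : Type*} (b : HilbertBasis ι 𝕜 E)
    (c : HilbertBasis κ 𝕜 F) : HilbertBasis (ι ⊕ κ) 𝕜 (WithLp 2 (E × F)) :=
  let v : ι ⊕ κ → WithLp 2 (E × F) :=
    Sum.elim (fun i => WithLp.toLp 2 (b i, 0)) (fun k => WithLp.toLp 2 (0, c k))
  have hv : Orthonormal 𝕜 v := by
    classical
    rw [orthonormal_iff_ite]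
    rintro (i | k) (i' | k') <;>
      simp [v, orthonormal_iff_ite.1 b.orthonormal, orthonormal_iff_ite.1 c.orthonormal]
  have hv_orthogonal : (Submodule.span 𝕜 (Set.range v))ᗮ = ⊥ := by
    refine (Submodule.eq_bot_iff _).2 fun x hx => ?_
    have hinner (i : ι ⊕ κ) : ⟪v i, x⟫_𝕜 = 0 :=
      hx _ (Submodule.subset_span (Set.mem_range_self i))
    have hfst : x.fst = 0 := b.repr.injective <| lp.ext <| funext fun i => by
      simpa [v, b.repr_apply_apply] using hinner (.inl i)
    have hsnd : x.snd = 0 := c.repr.injective <| lp.ext <| funext fun k => by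
      simpa [v, c.repr_apply_apply] using hinner (.inr k)
    exact (WithLp.ofLp_injective 2) (Prod.ext hfst hsnd)
  HilbertBasis.mkOfOrthogonalEqBot hv hv_orthogonal

theorem nonempty_linearIsometryEquiv_prod [CompleteSpace E] (hE : ¬ FiniteDimensional 𝕜 E)
    [FiniteDimensional 𝕜 F] : Nonempty (WithLp 2 (E × F) ≃ₗᵢ[𝕜] E) := by
  have := FiniteDimensional.complete 𝕜 F
  obtain ⟨w, b, -⟩ := exists_hilbertBasis 𝕜 E
  have := infinite_of_hilbertBasis b hE
  let c := hilbertBasisProd b (stdOrthonormalBasis 𝕜 F).toHilbertBasis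
  obtain ⟨e⟩ : Nonempty (w ≃ w ⊕ Fin (Module.finrank 𝕜 F)) :=
    Cardinal.lift_mk_eq'.1 (by simp [Cardinal.add_nat_eq _ (Cardinal.aleph0_le_mk w)])
  let b' := HilbertBasis.mk (c.orthonormal.comp e e.injective)
    (by rw [e.surjective.range_comp, c.dense_span])
  exact ⟨b'.repr.trans b.repr.symm⟩

theorem not_finiteDimensional_orthogonal (hE : ¬ FiniteDimensional 𝕜 E) (S : Submodule 𝕜 E)
    [FiniteDimensional 𝕜 S] : ¬ FiniteDimensional 𝕜 Sᗮ := fun _ =>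
  hE (S.prodEquivOfIsCompl Sᗮ S.isCompl_orthogonal).finiteDimensional

/-- The second summand is absorbed by the infinite-dimensional complement of `S`. -/
theorem exists_linearIsometryEquiv_prod_fixing [CompleteSpace E] (hE : ¬ FiniteDimensional 𝕜 E)
    [FiniteDimensional 𝕜 F] (S : Submodule 𝕜 E) [FiniteDimensional 𝕜 S] :
    ∃ U : WithLp 2 (E × F) ≃ₗᵢ[𝕜] E, ∀ x ∈ S, U (WithLp.toLp 2 (x, 0)) = x := by
  obtain ⟨e⟩ := nonempty_linearIsometryEquiv_prod (F := F) (not_finiteDimensional_orthogonal hE S)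
  let U : WithLp 2 (E × F) ≃ₗᵢ[𝕜] E :=
    (LinearIsometryEquiv.withLpProdCongr 2 S.orthogonalDecomposition (.refl 𝕜 F)).trans <|
      (LinearIsometryEquiv.withLpProdAssoc 2 𝕜 S Sᗮ F).trans <|
        (LinearIsometryEquiv.withLpProdCongr 2 (.refl 𝕜 S) e).trans
          S.orthogonalDecomposition.symm
  refine ⟨U, fun x hx => ?_⟩
  have hproj : Sᗮ.orthogonalProjectionOnto x = 0 := by
    simpa using hx
  simp [U, hproj, S.starProjection_eq_self_iff.2 hx]

theorem range_subtypeₗᵢ_comp (M : Submodule 𝕜 E) (e : F ≃ₗᵢ[𝕜] M) :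
    LinearMap.range (M.subtypeₗᵢ.comp e.toLinearIsometry).toLinearMap = M := by
  ext x
  exact ⟨fun ⟨y, hy⟩ => hy ▸ (e y).2, fun hx => ⟨e.symm ⟨x, hx⟩, by simp⟩⟩

theorem adjoint_apply_apply_self [CompleteSpace E] [CompleteSpace F] (v : F →ₗᵢ[𝕜] E) (x : F) :
    ContinuousLinearMap.adjoint v.toContinuousLinearMap (v x) = x :=
  congr($(v.adjoint_comp_self) x)

theorem apply_adjoint_of_mem_range [CompleteSpace E] [CompleteSpace F] (v : F →ₗᵢ[𝕜] E) {y : E}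
    (hy : y ∈ LinearMap.range v.toLinearMap) :
    v (ContinuousLinearMap.adjoint v.toContinuousLinearMap y) = y := by
  obtain ⟨x, rfl⟩ := hy
  exact congr(v $(adjoint_apply_apply_self v x))

end HilbertSpace

namespace CRep

variable {A H K L : Type*} [CStarAlgebra A] [NormedAddCommGroup H] [InnerProductSpace ℂ H]
  [CompleteSpace H] [NormedAddCommGroup K] [InnerProductSpace ℂ K] [CompleteSpace K]
  [NormedAddCommGroup L] [InnerProductSpace ℂ L] [CompleteSpace L]

theorem norm_apply_apply_le (π : CRep A H) (a : A) (x : H) : ‖π a x‖ ≤ ‖a‖ * ‖x‖ :=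
  (π a).le_of_opNorm_le (NonUnitalStarAlgHom.norm_apply_le π a) x

theorem inner_star_apply (π : CRep A H) (a : A) (x y : H) :
    ⟪π (star a) x, y⟫_ℂ = ⟪x, π a y⟫_ℂ := by
  rw [map_star, ContinuousLinearMap.star_eq_adjoint, ContinuousLinearMap.adjoint_inner_left]

/-- The representation with operators `T a`, for a family `T` satisfying the algebraic identities
of a unital `*`-homomorphism vector by vector. -/
def ofPointwise (T : A → H →L[ℂ] H) (hadd : ∀ a b x, T (a + b) x = T a x + T b x)
    (hsmul : ∀ (c : ℂ) a x, T (c • a) x = c • T a x) (hone : ∀ x, T 1 x = x)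
    (hmul : ∀ a b x, T (a * b) x = T a (T b x))
    (hstar : ∀ a x y, ⟪T (star a) x, y⟫_ℂ = ⟪x, T a y⟫_ℂ) : CRep A H where
  __ := AlgHom.ofLinearMap
    { toFun := T
      map_add' := fun a b => ContinuousLinearMap.ext (hadd a b)
      map_smul' := fun c a => ContinuousLinearMap.ext (hsmul c a) }
    (ContinuousLinearMap.ext hone) fun a b => ContinuousLinearMap.ext (hmul a b)
  map_star' a := (ContinuousLinearMap.eq_adjoint_iff _ _).2 (hstar a)

/-- `π` is unitarily equivalent to a subrepresentation of `ρ`: some isometry (automatically of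
closed range) intertwines `π` and `ρ`. -/
def Embeds (π : CRep A H) (ρ : CRep A K) : Prop :=
  ∃ u : H →ₗᵢ[ℂ] K, ∀ a x, ρ a (u x) = u (π a x)

theorem Embeds.trans {π : CRep A H} {ρ : CRep A K} {σ : CRep A L} (hπρ : π.Embeds ρ)
    (hρσ : ρ.Embeds σ) : π.Embeds σ := by
  obtain ⟨u, hu⟩ := hπρ
  obtain ⟨v, hv⟩ := hρσ
  exact ⟨v.comp u, fun a x => by simp only [LinearIsometry.coe_comp, Function.comp_apply, hv, hu]⟩

/-- The isolation property of Wang. Since every separable Hilbert space is isometric to some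
`ℓ²(s)` with `s ⊆ ℕ`, nothing is lost by letting `K` range over `Type`. -/
def IsIsolated (π : CRep A H) : Prop :=
  ∀ (K : Type) [NormedAddCommGroup K] [InnerProductSpace ℂ K] [CompleteSpace K]
    [SeparableSpace K] (ρ : CRep A K), CRepPrec π ρ → π.Embeds ρ

/-- Transport of a representation along an isometric isomorphism. -/
def conj (π : CRep A H) (e : H ≃ₗᵢ[ℂ] K) : CRep A K :=
  (e.conjStarAlgEquiv : (H →L[ℂ] H) →⋆ₐ[ℂ] (K →L[ℂ] K)).comp π

theorem conj_apply (π : CRep A H) (e : H ≃ₗᵢ[ℂ] K) (a : A) (y : K) :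
    π.conj e a y = e (π a (e.symm y)) := rfl

theorem embeds_conj (π : CRep A H) (e : H ≃ₗᵢ[ℂ] K) : π.Embeds (π.conj e) :=
  ⟨e.toLinearIsometry, fun a x => by simp [conj_apply]⟩

/-- The direct sum of two representations. -/
def prod (π : CRep A H) (σ : CRep A K) : CRep A (WithLp 2 (H × K)) :=
  ofPointwise
    (fun a => (WithLp.prodContinuousLinearEquiv 2 ℂ H K).symm.toContinuousLinearMap ∘L
      (π a).prodMap (σ a) ∘L (WithLp.prodContinuousLinearEquiv 2 ℂ H K).toContinuousLinearMap)
    (fun a b x => by simp [← WithLp.toLp_add, Prod.map])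
    (fun c a x => by simp [← WithLp.toLp_smul, Prod.map])
    (fun x => by simp)
    (fun a b x => by simp [Prod.map])
    (fun a x y => by simp [WithLp.prod_inner_apply, inner_star_apply])

theorem prod_apply (π : CRep A H) (σ : CRep A K) (a : A) (x : WithLp 2 (H × K)) :
    π.prod σ a x = WithLp.toLp 2 (π a x.fst, σ a x.snd) := rfl

theorem embeds_prod_right (π : CRep A H) (σ : CRep A K) : σ.Embeds (π.prod σ) :=
  ⟨prodInrIsometry ℂ H K, fun a y => congr(WithLp.toLp 2 ($(map_zero (π a)), σ a y))⟩

/-- The Hilbert space direct sum of a family of representations. -/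
def hilbertSum {ι : Type*} {G : ι → Type*} [∀ i, NormedAddCommGroup (G i)]
    [∀ i, InnerProductSpace ℂ (G i)] [∀ i, CompleteSpace (G i)] (π : ∀ i, CRep A (G i)) :
    CRep A (lp G 2) :=
  ofPointwise
    (fun a => lp.mapCLM 2 (fun i => π i a) (norm_nonneg a)
      fun i => NonUnitalStarAlgHom.norm_apply_le (π i) a)
    (fun a b f => by ext i; simp)
    (fun c a f => by ext i; simp)
    (fun f => by ext i; simp)
    (fun a b f => by ext i; simp)
    (fun a f g => by
      simp only [lp.inner_eq_tsum]
      exact tsum_congr fun i => (π i).inner_star_apply a _ _)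

theorem hilbertSum_apply {ι : Type*} {G : ι → Type*} [∀ i, NormedAddCommGroup (G i)]
    [∀ i, InnerProductSpace ℂ (G i)] [∀ i, CompleteSpace (G i)] (π : ∀ i, CRep A (G i)) (a : A)
    (f : lp G 2) (i : ι) : hilbertSum π a f i = π i a (f i) := rfl

/-- The subrepresentation of `π` on the invariant range of an isometry `v`, carried back to the
domain of `v`. -/
def compress (π : CRep A H) (v : K →ₗᵢ[ℂ] H)
    (hv : CRepInvariant π (LinearMap.range v.toLinearMap)) : CRep A K :=
  have hrange (a : A) (x : K) :
      v (ContinuousLinearMap.adjoint v.toContinuousLinearMap (π a (v x))) = π a (v x) :=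
    apply_adjoint_of_mem_range v (hv a (v x) ⟨x, rfl⟩)
  ofPointwise
    (fun a => ContinuousLinearMap.adjoint v.toContinuousLinearMap ∘L π a ∘L
      v.toContinuousLinearMap)
    (fun a b x => by simp)
    (fun c a x => by simp)
    (fun x => by simp [adjoint_apply_apply_self])
    (fun a b x => by simp [hrange])
    (fun a x y => by
      simp [ContinuousLinearMap.adjoint_inner_left, ContinuousLinearMap.adjoint_inner_right,
        inner_star_apply])

theorem map_compress_apply (π : CRep A H) (v : K →ₗᵢ[ℂ] H)
    (hv : CRepInvariant π (LinearMap.range v.toLinearMap)) (a : A) (x : K) :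
    v (π.compress v hv a x) = π a (v x) :=
  apply_adjoint_of_mem_range v (hv a (v x) ⟨x, rfl⟩)

theorem compress_embeds (π : CRep A H) (v : K →ₗᵢ[ℂ] H)
    (hv : CRepInvariant π (LinearMap.range v.toLinearMap)) : (π.compress v hv).Embeds π :=
  ⟨v, fun a x => (π.map_compress_apply v hv a x).symm⟩

/-- The closed invariant subspace generated by a set of vectors. -/
def cyclicSubspace (π : CRep A H) (s : Set H) : Submodule ℂ H :=
  (Submodule.span ℂ (Set.image2 (fun a x => π a x) Set.univ s)).topologicalClosure

theorem subset_cyclicSubspace (π : CRep A H) (s : Set H) : s ⊆ π.cyclicSubspace s := fun x hx =>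
  subset_closure (Submodule.subset_span ⟨1, Set.mem_univ _, x, hx, by simp⟩)

theorem isClosed_cyclicSubspace (π : CRep A H) (s : Set H) :
    IsClosed (π.cyclicSubspace s : Set H) :=
  Submodule.isClosed_topologicalClosure _

theorem invariant_cyclicSubspace (π : CRep A H) (s : Set H) :
    CRepInvariant π (π.cyclicSubspace s) := by
  intro a
  have hspan : Submodule.span ℂ (Set.image2 (fun a x => π a x) Set.univ s) ≤
      (π.cyclicSubspace s).comap (π a).toLinearMap := by
    rw [Submodule.span_le]
    rintro _ ⟨b, -, x, hx, rfl⟩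
    refine subset_closure (Submodule.subset_span ⟨a * b, Set.mem_univ _, x, hx, ?_⟩)
    simp
  exact Submodule.topologicalClosure_minimal _ hspan
    ((π.isClosed_cyclicSubspace s).preimage (π a).continuous)

theorem equicontinuous_uncurry :
    Equicontinuous fun (ρ : CRep A H) (p : A × H) => ρ p.1 p.2 := by
  rintro ⟨b, y⟩
  refine Metric.equicontinuousAt_of_continuity_modulus
    (fun p : A × H => ‖b - p.1‖ * ‖y‖ + ‖p.1‖ * ‖y - p.2‖) ?_ _ (.of_forall fun p ρ => ?_)
  · have hcont : Continuous fun p : A × H => ‖b - p.1‖ * ‖y‖ + ‖p.1‖ * ‖y - p.2‖ := by fun_prop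
    simpa using hcont.tendsto (b, y)
  · calc dist (ρ b y) (ρ p.1 p.2) = ‖ρ (b - p.1) y + ρ p.1 (y - p.2)‖ := by
          simp [dist_eq_norm]
      _ ≤ ‖b - p.1‖ * ‖y‖ + ‖p.1‖ * ‖y - p.2‖ :=
          norm_add_le_of_le (ρ.norm_apply_apply_le _ _) (ρ.norm_apply_apply_le _ _)

theorem continuous_uncurry (π : CRep A H) : Continuous fun p : A × H => π p.1 p.2 :=
  equicontinuous_uncurry.continuous π

theorem separableSpace_cyclicSubspace [SeparableSpace A] (π : CRep A H) {s : Set H}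
    (hs : IsSeparable s) : SeparableSpace (π.cyclicSubspace s) := by
  have horbit : IsSeparable (Set.image2 (fun a x => π a x) Set.univ s) := by
    rw [← Set.image_prod]
    exact ((IsSeparable.of_separableSpace Set.univ).prod hs).image π.continuous_uncurry
  exact (horbit.span (R := ℂ)).closure.separableSpace

theorem exists_intertwining_lp_set_nat [SeparableSpace A] (π : CRep A H) {s : Set H}
    (hs : IsSeparable s) :
    ∃ (t : Set ℕ) (σ : CRep A (lp (fun _ : t => ℂ) 2)) (j : lp (fun _ : t => ℂ) 2 →ₗᵢ[ℂ] H),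
      SeparableSpace (lp (fun _ : t => ℂ) 2) ∧ (∀ a x, π a (j x) = j (σ a x)) ∧
        s ⊆ Set.range j := by
  let M := π.cyclicSubspace s
  have : SeparableSpace M := π.separableSpace_cyclicSubspace hs
  have : CompleteSpace M := (π.isClosed_cyclicSubspace s).completeSpace_coe
  obtain ⟨t, ⟨e⟩⟩ := exists_linearIsometryEquiv_lp_set_nat (𝕜 := ℂ) (E := M)
  let j := M.subtypeₗᵢ.comp e.symm.toLinearIsometry
  have hj : LinearMap.range j.toLinearMap = M := range_subtypeₗᵢ_comp M e.symm
  have hinv : CRepInvariant π (LinearMap.range j.toLinearMap) := by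
    rw [hj]
    exact π.invariant_cyclicSubspace s
  refine ⟨t, π.compress j hinv, j, e.surjective.denseRange.separableSpace e.continuous,
    fun a x => (π.map_compress_apply j hinv a x).symm, fun x hx => ?_⟩
  have hxM : x ∈ LinearMap.range j.toLinearMap := hj ▸ π.subset_cyclicSubspace s hx
  exact hxM

theorem continuous_apply_apply (a : A) (x : H) : Continuous fun π : CRep A H => π a x :=
  have heval : Continuous fun (π : CRep A H) (a : A) (x : H) => π a x := continuous_induced_dom
  (continuous_apply x).comp ((continuous_apply a).comp heval)

theorem exists_seq_tendsto_of_mem_closure {S : Set (CRep A H)} {π : CRep A H}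
    (hπ : π ∈ closure S) {s : Set (A × H)} (hs : IsSeparable s) :
    ∃ ρ : ℕ → CRep A H, (∀ k, ρ k ∈ S) ∧
      ∀ p ∈ s, Tendsto (fun k => ρ k p.1 p.2) atTop (𝓝 (π p.1 p.2)) := by
  obtain ⟨c, hc, hsc⟩ := hs
  have := hc.to_subtype
  let Φ : CRep A H → c → H := fun ρ d => ρ d.1.1 d.1.2
  have hΦ : Continuous Φ := continuous_pi fun d => continuous_apply_apply _ _
  obtain ⟨y, hy, hlim⟩ := mem_closure_iff_seq_limit.1
    (image_closure_subset_closure_image hΦ ⟨π, hπ, rfl⟩)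
  choose ρ hρS hρ using hy
  obtain rfl : (fun k => Φ (ρ k)) = y := funext hρ
  have hc_lim : c ⊆ {p : A × H | Tendsto (fun k => ρ k p.1 p.2) atTop (𝓝 (π p.1 p.2))} :=
    fun d hd => tendsto_pi_nhds.1 hlim ⟨d, hd⟩
  have hclosed : IsClosed {p : A × H | Tendsto (fun k => ρ k p.1 p.2) atTop (𝓝 (π p.1 p.2))} :=
    (equicontinuous_uncurry.comp ρ).isClosed_setOfPred_tendsto π.continuous_uncurry
  exact ⟨ρ, hρS, fun p hp => hclosed.closure_subset_iff.2 hc_lim (hsc hp)⟩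

theorem mem_closure_of_forall_finset {S : Set (CRep A H)} {π : CRep A H}
    (h : ∀ I : Finset (A × H), ∃ ρ ∈ S, ∀ p ∈ I, ρ p.1 p.2 = π p.1 p.2) : π ∈ closure S := by
  choose ρ hρS hρπ using h
  refine mem_closure_of_tendsto (f := ρ) (b := atTop) ?_ (.of_forall hρS)
  rw [nhds_induced, tendsto_comap_iff, tendsto_pi_nhds]
  refine fun a => tendsto_pi_nhds.2 fun x => tendsto_nhds_of_eventually_eq ?_
  filter_upwards [eventually_ge_atTop {(a, x)}] with I hI
  exact hρπ I (a, x) (hI (Finset.mem_singleton_self _))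

theorem exists_embeds_eqOn_finset (hH : ¬ FiniteDimensional ℂ H) [FiniteDimensional ℂ K]
    (π : CRep A H) (σ : CRep A K) (I : Finset (A × H)) :
    ∃ ρ : CRep A H, σ.Embeds ρ ∧ ∀ p ∈ I, ρ p.1 p.2 = π p.1 p.2 := by
  classical
  let S : Submodule ℂ H :=
    Submodule.span ℂ (I.image Prod.snd ∪ I.image fun p => π p.1 p.2 : Finset H)
  obtain ⟨U, hU⟩ := exists_linearIsometryEquiv_prod_fixing (F := K) hH S
  refine ⟨(π.prod σ).conj U, (embeds_prod_right π σ).trans (embeds_conj _ U), fun p hp => ?_⟩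
  have hvec : p.2 ∈ S :=
    Submodule.subset_span (Finset.mem_union_left _ (Finset.mem_image_of_mem _ hp))
  have himage : π p.1 p.2 ∈ S :=
    Submodule.subset_span (Finset.mem_union_right _ (Finset.mem_image_of_mem _ hp))
  have hsymm : U.symm p.2 = WithLp.toLp 2 (p.2, 0) := by
    rw [LinearIsometryEquiv.symm_apply_eq, hU _ hvec]
  calc (π.prod σ).conj U p.1 p.2 = U (π.prod σ p.1 (WithLp.toLp 2 (p.2, 0))) := by
        rw [conj_apply, hsymm]
    _ = U (WithLp.toLp 2 (π p.1 p.2, 0)) := by simp [prod_apply]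
    _ = π p.1 p.2 := hU _ himage

theorem prec_of_tendsto_inner {π : CRep A H} {ρ : CRep A K} {ι : Type*} {l : Filter ι} [l.NeBot]
    (w : ι → H → K) (hw : ∀ k x y, ⟪w k x, w k y⟫_ℂ = ⟪x, y⟫_ℂ)
    (hlim : ∀ a x, Tendsto (fun k => ⟪ρ a (w k x), w k x⟫_ℂ) l (𝓝 ⟪π a x, x⟫_ℂ)) :
    CRepPrec π ρ := by
  intro Ω n ξ hξ ε hε
  have hclose : ∀ᶠ k in l, ∀ a ∈ Ω, ∀ i : Fin n,
      ‖⟪π a (ξ i), ξ i⟫_ℂ - ⟪ρ a (w k (ξ i)), w k (ξ i)⟫_ℂ‖ < ε := by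
    refine (eventually_all_finset Ω).2 fun a _ => eventually_all.2 fun i => ?_
    filter_upwards [(hlim a (ξ i)).eventually (Metric.ball_mem_nhds _ hε)] with k hk
    rwa [← dist_eq_norm, dist_comm]
  obtain ⟨k, hk⟩ := hclose.exists
  refine ⟨fun i => w k (ξ i), ?_, hk⟩
  simpa only [orthonormal_iff_ite, hw] using hξ

/-- The sum acts on the copies of `v x` in its summands more and more like `π₁` acts on `x`. These
copies generate a separable subrepresentation of the sum, which isolation applies to. -/
theorem IsIsolated.embeds_hilbertSum_of_tendsto [SeparableSpace A] [SeparableSpace K] {ι : Type*}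
    [Countable ι] {l : Filter ι} [l.NeBot] {π₁ : CRep A K} (hπ₁ : π₁.IsIsolated)
    {ρ : ι → CRep A H} (v : K →ₗᵢ[ℂ] H)
    (hlim : ∀ a x, Tendsto (fun k => ρ k a (v x)) l (𝓝 (v (π₁ a x)))) :
    π₁.Embeds (hilbertSum ρ) := by
  classical
  let copy (k : ι) (x : K) : lp (fun _ : ι => H) 2 := lp.single 2 k (v x)
  have hcopies : IsSeparable (⋃ k, Set.range (copy k)) := .iUnion fun k =>
    isSeparable_range (((lp.singleContinuousLinearMap ℂ (fun _ : ι => H) 2 k).comp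
      v.toContinuousLinearMap).continuous)
  obtain ⟨t, σ, j, _, hj, hcopy⟩ := (hilbertSum ρ).exists_intertwining_lp_set_nat hcopies
  have hlift (k : ι) (x : K) : ∃ y, j y = copy k x := hcopy (Set.mem_iUnion.2 ⟨k, x, rfl⟩)
  choose w hw using hlift
  have hσ : CRepPrec π₁ σ := by
    refine prec_of_tendsto_inner w (fun k x y => ?_) (l := l) fun a x => ?_
    · rw [← j.inner_map_map, hw, hw, lp.inner_single_right, lp.single_apply_self, v.inner_map_map]
    · have hcoeff (k : ι) : ⟪σ a (w k x), w k x⟫_ℂ = ⟪ρ k a (v x), v x⟫_ℂ := by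
        rw [← j.inner_map_map, ← hj, hw, lp.inner_single_right, hilbertSum_apply,
          lp.single_apply_self]
      simpa only [hcoeff, v.inner_map_map] using (hlim a x).inner (𝕜 := ℂ)
        (tendsto_const_nhds (x := v x))
  have hσ_embeds : σ.Embeds (hilbertSum ρ) := ⟨j, hj⟩
  exact (hπ₁ _ σ hσ).trans hσ_embeds

theorem irreducible_compress (π : CRep A H) (v : K →ₗᵢ[ℂ] H)
    (hv : CRepInvariant π (LinearMap.range v.toLinearMap))
    (hmin : ∀ L ≤ LinearMap.range v.toLinearMap, CRepInvariant π L →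
      L = ⊥ ∨ L = LinearMap.range v.toLinearMap) : CRepIrreducible (π.compress v hv) := by
  intro L _ hL
  have hinv : CRepInvariant π (L.map v.toLinearMap) := by
    rintro a _ ⟨x, hx, rfl⟩
    exact ⟨_, hL a x hx, π.map_compress_apply v hv a x⟩
  have hinj := Submodule.map_injective_of_injective v.injective
  refine (hmin _ LinearMap.map_le_range hinv).imp (fun hbot => hinj ?_) (fun htop => hinj ?_)
  · simpa using hbot
  · simpa using htop

end CRep

section WeaklyMixing

variable {A H K : Type*} [CStarAlgebra A] [NormedAddCommGroup H] [InnerProductSpace ℂ H]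
  [CompleteSpace H] [NormedAddCommGroup K] [InnerProductSpace ℂ K] [CompleteSpace K]

theorem CRepWeaklyMixing.eq_zero_of_intertwines {π : CRep A H} (hπ : CRepWeaklyMixing π)
    {E : Type*} [AddCommGroup E] [Module ℂ E] [FiniteDimensional ℂ E] (u : E →ₗ[ℂ] H)
    (σ : A → E → E) (hu : ∀ a x, π a (u x) = u (σ a x)) : u = 0 := by
  rw [← LinearMap.range_eq_bot]
  refine hπ _ (Submodule.closed_of_finiteDimensional _) inferInstance ?_
  rintro a _ ⟨x, rfl⟩
  exact ⟨σ a x, (hu a x).symm⟩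

theorem CRepWeaklyMixing.hilbertSum {ι : Type*} {G : ι → Type*} [∀ i, NormedAddCommGroup (G i)]
    [∀ i, InnerProductSpace ℂ (G i)] [∀ i, CompleteSpace (G i)] {π : ∀ i, CRep A (G i)}
    (hπ : ∀ i, CRepWeaklyMixing (π i)) : CRepWeaklyMixing (CRep.hilbertSum π) := by
  intro M _ _ hM
  have hcoord (i : ι) : (lp.evalCLM ℂ G 2 i).toLinearMap ∘ₗ M.subtype = 0 :=
    (hπ i).eq_zero_of_intertwines _ (fun a x => ⟨CRep.hilbertSum π a x, hM a x x.2⟩)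
      fun a x => (CRep.hilbertSum_apply π a x i).symm
  refine (Submodule.eq_bot_iff M).2 fun x hx => ?_
  ext i
  exact congr($(hcoord i) ⟨x, hx⟩)

theorem CRep.Embeds.not_weaklyMixing [FiniteDimensional ℂ K] [Nontrivial K] {σ : CRep A K}
    {π : CRep A H} (hσ : σ.Embeds π) : ¬ CRepWeaklyMixing π := by
  obtain ⟨u, hu⟩ := hσ
  intro hπ
  have hzero : u.toLinearMap = 0 := hπ.eq_zero_of_intertwines _ (fun a => σ a) hu
  obtain ⟨x, hx⟩ := exists_ne (0 : K)
  exact hx (u.injective (by simpa using congr($hzero x)))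

theorem exists_minimal_invariant_of_not_weaklyMixing {π : CRep A H} (hπ : ¬ CRepWeaklyMixing π) :
    ∃ M : Submodule ℂ H, FiniteDimensional ℂ M ∧ CRepInvariant π M ∧ M ≠ ⊥ ∧
      ∀ L ≤ M, CRepInvariant π L → L = ⊥ ∨ L = M := by
  let P (M : Submodule ℂ H) : Prop := FiniteDimensional ℂ M ∧ CRepInvariant π M ∧ M ≠ ⊥
  have hP : ∃ M, P M := by
    simp only [CRepWeaklyMixing, not_forall] at hπ
    obtain ⟨M, -, hfin, hinv, hne⟩ := hπ
    exact ⟨M, hfin, hinv, hne⟩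
  obtain ⟨M, ⟨hfin, hinv, hne⟩, hmin⟩ :=
    exists_minimalFor_of_wellFoundedLT P (fun M => Module.finrank ℂ M) hP
  refine ⟨M, hfin, hinv, hne, fun L hLM hL => or_iff_not_imp_left.2 fun hLne => ?_⟩
  have hdim : Module.finrank ℂ M ≤ Module.finrank ℂ L :=
    hmin ⟨Submodule.finiteDimensional_of_le hLM, hL, hLne⟩ (Submodule.finrank_mono hLM)
  exact Submodule.eq_of_le_of_finrank_le hLM hdim

theorem exists_irreducible_embeds_of_not_weaklyMixing {π : CRep A H} (hπ : ¬ CRepWeaklyMixing π) :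
    ∃ (n : ℕ) (_ : 0 < n) (π₁ : CRep A (EuclideanSpace ℂ (Fin n))),
      CRepIrreducible π₁ ∧ π₁.Embeds π := by
  obtain ⟨M, _, hinv, hne, hmin⟩ := exists_minimal_invariant_of_not_weaklyMixing hπ
  let e := (stdOrthonormalBasis ℂ M).repr.symm
  rw [← range_subtypeₗᵢ_comp M e] at hinv hmin
  exact ⟨Module.finrank ℂ M, Module.finrank_pos_iff.2 (Submodule.nontrivial_iff_ne_bot.2 hne),
    π.compress _ hinv, π.irreducible_compress _ hinv hmin, π.compress_embeds _ hinv⟩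

theorem isClosed_weaklyMixing [SeparableSpace A]
    (hisol : ∀ (n : ℕ) (π₁ : CRep A (EuclideanSpace ℂ (Fin n))),
      CRepIrreducible π₁ → π₁.IsIsolated) :
    IsClosed {π : CRep A H | CRepWeaklyMixing π} := by
  refine isClosed_of_closure_subset fun π hπ => ?_
  by_contra hnot
  obtain ⟨n, hn, π₁, hirr, v, hv⟩ := exists_irreducible_embeds_of_not_weaklyMixing hnot
  have : Nonempty (Fin n) := ⟨⟨0, hn⟩⟩
  obtain ⟨ρ, hρ, hlim⟩ := CRep.exists_seq_tendsto_of_mem_closure hπ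
    ((IsSeparable.of_separableSpace Set.univ).prod (isSeparable_range v.continuous))
  have hembeds : π₁.Embeds (CRep.hilbertSum ρ) :=
    (hisol n π₁ hirr).embeds_hilbertSum_of_tendsto v fun a x => by
      simpa only [hv] using hlim (a, v x) ⟨Set.mem_univ a, x, rfl⟩
  exact hembeds.not_weaklyMixing (CRepWeaklyMixing.hilbertSum hρ)

theorem dense_not_weaklyMixing (hH : ¬ FiniteDimensional ℂ H) [FiniteDimensional ℂ K]
    [Nontrivial K] (σ : CRep A K) : Dense {π : CRep A H | ¬ CRepWeaklyMixing π} := fun π =>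
  CRep.mem_closure_of_forall_finset fun I =>
    (CRep.exists_embeds_eqOn_finset hH π σ I).imp fun _ => And.imp_left CRep.Embeds.not_weaklyMixing

theorem isClosed_isNowhereDense_weaklyMixing_general [SeparableSpace A]
    (hH : ¬ FiniteDimensional ℂ H) {n : ℕ} (hn : 0 < n) (σ : CRep A (EuclideanSpace ℂ (Fin n)))
    (hisol : ∀ (m : ℕ) (π₁ : CRep A (EuclideanSpace ℂ (Fin m))),
      CRepIrreducible π₁ → π₁.IsIsolated) :
    IsClosed {π : CRep A H | CRepWeaklyMixing π} ∧
      IsNowhereDense {π : CRep A H | CRepWeaklyMixing π} := by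
  have : Nonempty (Fin n) := ⟨⟨0, hn⟩⟩
  have hclosed : IsClosed {π : CRep A H | CRepWeaklyMixing π} := isClosed_weaklyMixing hisol
  refine ⟨hclosed, ?_⟩
  rw [hclosed.isNowhereDense_iff, interior_eq_empty_iff_dense_compl]
  exact dense_not_weaklyMixing hH σ

end WeaklyMixing

/-- let `A` be a separable unital C*-algebra admitting a finite-dimensional
irreducible unital representation, and suppose every finite-dimensional irreducible unital
representation `π₁` of `A` which is weakly contained (in the sense of `≺`) in a unital
representation `ρ` of `A` on a separable Hilbert space is unitarily equivalent to a
subrepresentation of `ρ`. Then for a separable infinite-dimensional Hilbert space `H`, the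
set of weakly mixing representations is closed and nowhere dense in `Rep(A,H)` in the
point-strong operator topology. -/
theorem isClosed_isNowhereDense_weaklyMixing
    (A H : Type*) [CStarAlgebra A] [TopologicalSpace.SeparableSpace A]
    [NormedAddCommGroup H] [InnerProductSpace ℂ H] [CompleteSpace H]
    [TopologicalSpace.SeparableSpace H] (hH : ¬ FiniteDimensional ℂ H)
    (hex : ∃ (n : ℕ) (_ : 0 < n) (ρ : CRep A (EuclideanSpace ℂ (Fin n))),
      CRepIrreducible ρ)
    (hyp : ∀ (n : ℕ) (π₁ : CRep A (EuclideanSpace ℂ (Fin n))), CRepIrreducible π₁ →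
      ∀ (K : Type) (_ : NormedAddCommGroup K) (_ : InnerProductSpace ℂ K)
        (_ : CompleteSpace K) (_ : TopologicalSpace.SeparableSpace K)
        (ρ : CRep A K), CRepPrec π₁ ρ →
          ∃ u : EuclideanSpace ℂ (Fin n) →ₗᵢ[ℂ] K,
            ∀ (a : A) (x : EuclideanSpace ℂ (Fin n)), ρ a (u x) = u (π₁ a x)) :
    IsClosed {π : CRep A H | CRepWeaklyMixing π} ∧
      IsNowhereDense {π : CRep A H | CRepWeaklyMixing π} := by
  obtain ⟨_, hn, σ, -⟩ := hex
  exact isClosed_isNowhereDense_weaklyMixing_general hH hn σ hyp
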